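/- arXiv:1402.2119 — 3 statements merged into one kernel-verified Lean document; each statement's English description precedes it below -/
import Mathlib

section
/- The sum over all two-connected graphs on vertex set {1,...,n} of (-1)^(number of edges) equals -(n-2)!, for all n ≥ 2. -/
open scoped Classical

/-- A graph is two-connected if it is connected and remains connected after
deleting any single vertex (and its incident edges). -/
def TwoConnected {V : Type*} (G : SimpleGraph V) : Prop :=
  G.Connected ∧ ∀ v : V, (G.induce ({v}ᶜ : Set V)).Connected

namespace TwoConnected

open SimpleGraph Relation

variable {V : Type*} {G H : SimpleGraph V}

/-- `ReachAvoid G d x y`: there is a walk in `G` from `x` to `y` all of whose steps avoid `d`. -/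
def ReachAvoid (G : SimpleGraph V) (d : V) : V → V → Prop :=
  ReflTransGen fun a b => G.Adj a b ∧ a ≠ d ∧ b ≠ d

theorem ReachAvoid.symm {d x y : V} (h : ReachAvoid G d x y) : ReachAvoid G d y x := by
  induction h with
  | refl => exact .refl
  | tail _ hb ih => exact .head ⟨hb.1.symm, hb.2.2, hb.2.1⟩ ih

theorem ReachAvoid.trans {d x y z : V} (h : ReachAvoid G d x y) (h' : ReachAvoid G d y z) :
    ReachAvoid G d x z :=
  ReflTransGen.trans h h'

theorem ReachAvoid.step {d x y : V} (h : G.Adj x y) (hx : x ≠ d) (hy : y ≠ d) :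
    ReachAvoid G d x y :=
  .single ⟨h, hx, hy⟩

theorem ReachAvoid.lift {W : Type*} {K : SimpleGraph W} {d x y : V} {e : W} (f : V → W)
    (hf : ∀ a b, G.Adj a b → a ≠ d → b ≠ d → ReachAvoid K e (f a) (f b))
    (h : ReachAvoid G d x y) : ReachAvoid K e (f x) (f y) := by
  induction h with
  | refl => exact .refl
  | tail _ hb ih => exact ih.trans (hf _ _ hb.1 hb.2.1 hb.2.2)

theorem ReachAvoid.mono {d x y : V} (hGH : ∀ a b, G.Adj a b → a ≠ d → b ≠ d → H.Adj a b)
    (h : ReachAvoid G d x y) : ReachAvoid H d x y :=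
  h.lift id fun a b hab ha hb => .step (hGH a b hab ha hb) ha hb

theorem ReachAvoid.ne_right {d x y : V} (h : ReachAvoid G d x y) (hx : x ≠ d) : y ≠ d := by
  cases h with
  | refl => exact hx
  | tail _ h => exact h.2.2

theorem ReachAvoid.reachable {d x y : V} (h : ReachAvoid G d x y) : G.Reachable x y :=
  (reachable_iff_reflTransGen x y).2 (ReflTransGen.mono (fun _ _ h => h.1) _ _ h)

theorem reachable_induce_compl_iff {d : V} (x y : ({d}ᶜ : Set V)) :
    (G.induce ({d}ᶜ : Set V)).Reachable x y ↔ ReachAvoid G d x y := by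
  rw [reachable_iff_reflTransGen]
  constructor
  · exact fun h => ReflTransGen.lift Subtype.val (fun a b hab => ⟨hab, a.2, b.2⟩) _ _ h
  · obtain ⟨x, hx⟩ := x
    obtain ⟨y, hy⟩ := y
    intro h
    change ReachAvoid G d x y at h
    induction h with
    | refl => exact .refl
    | tail _ hb ih => exact .tail (ih hb.2.1) hb.1

theorem iff_reachAvoid [Nontrivial V] : TwoConnected G ↔
    (∀ x y, G.Reachable x y) ∧ ∀ d x y, x ≠ d → y ≠ d → ReachAvoid G d x y := by
  constructor
  · rintro ⟨h, h'⟩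
    exact ⟨h.preconnected, fun d x y hx hy =>
      (reachable_induce_compl_iff ⟨x, hx⟩ ⟨y, hy⟩).1 ((h' d).preconnected _ _)⟩
  · rintro ⟨h, h'⟩
    refine ⟨⟨h⟩, fun d => ?_⟩
    obtain ⟨z, hz⟩ := exists_ne d
    have : Nonempty ({d}ᶜ : Set V) := ⟨⟨z, hz⟩⟩
    exact ⟨fun x y => (reachable_induce_compl_iff x y).2 (h' d x y x.2 y.2)⟩

theorem iff_reachAvoid_of_two_lt_card [Fintype V] (hV : 2 < Fintype.card V) :
    TwoConnected G ↔ ∀ d x y, x ≠ d → y ≠ d → ReachAvoid G d x y := by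
  have : Nontrivial V := Fintype.one_lt_card_iff_nontrivial.1 (by omega)
  rw [iff_reachAvoid, and_iff_right_iff_imp]
  intro h x y
  obtain ⟨d, hd⟩ : ∃ d, d ∉ ({x, y} : Finset V) := by
    by_contra! hd
    have := Finset.card_le_card (fun d _ => hd d : Finset.univ ⊆ ({x, y} : Finset V))
    have := Finset.card_le_two (a := x) (b := y)
    rw [Finset.card_univ] at *
    omega
  simp only [Finset.mem_insert, Finset.mem_singleton, not_or] at hd
  exact (h d x y (Ne.symm hd.1) (Ne.symm hd.2)).reachable

theorem mono [Nontrivial V] (hGH : G ≤ H) (hG : TwoConnected G) : TwoConnected H := by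
  rw [iff_reachAvoid] at *
  exact ⟨fun x y => (hG.1 x y).mono hGH, fun d x y hx hy =>
    (hG.2 d x y hx hy).mono fun a b hab _ _ => hGH hab⟩

/-- A vertex set reachable while avoiding `d` is reachable while avoiding any vertex outside it. -/
theorem ReachAvoid.change {c d s z : V} (h : ReachAvoid G c s z) (hd : ¬ ReachAvoid G c s d) :
    ReachAvoid G d s z := by
  induction h with
  | refl => exact .refl
  | @tail a b hab hb ih =>
    refine .tail ih ⟨hb.1, ?_, ?_⟩
    · rintro rfl
      exact hd hab
    · rintro rfl
      exact hd (.tail hab hb)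

/-- If `s` can reach `c` avoiding `e`, then `c` is attached to the component of `s` in `G - c`. -/
theorem ReachAvoid.to_cut {c d e s : V} (hHG : ∀ a b, H.Adj a b → a ≠ e → b ≠ e → G.Adj a b)
    (h : ReachAvoid H e s c) (hs : s ≠ c) (hd : ¬ ReachAvoid G c s d) (hdc : d ≠ c) :
    ReachAvoid G d s c := by
  suffices ∀ z, ReachAvoid H e s z → ReachAvoid G d s c ∨ z ≠ c ∧ ReachAvoid G c s z by
    simpa using this c h
  intro z hz
  induction hz with
  | refl => exact .inr ⟨hs, .refl⟩
  | @tail a b _ hb ih =>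
    obtain ih | ⟨hac, ih⟩ := ih
    · exact .inl ih
    have hab := hHG a b hb.1 hb.2.1 hb.2.2
    by_cases hbc : b = c
    · subst hbc
      refine .inl ((ih.change hd).trans (.step hab ?_ hdc.symm))
      rintro rfl
      exact hd ih
    · exact .inr ⟨hbc, ih.tail ⟨hab, hac, hbc⟩⟩

/-- `G` becomes two-connected on adding the edge `uv`, and `c` is the cut vertex
separating `u` from `v` that is nearest to `v`. -/
structure LastCut (u v c : V) (G : SimpleGraph V) : Prop where
  ne_left : c ≠ u
  ne_right : c ≠ v
  sup_edge : TwoConnected (G ⊔ edge u v)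
  not_reach : ¬ ReachAvoid G c u v
  reach : ∀ d, d ≠ c → d ≠ v → ReachAvoid G c v d → ReachAvoid G d u v

theorem adj_of_sup_edge {u v a b : V} (h : (G ⊔ edge u v).Adj a b)
    (hu : a ≠ u ∧ b ≠ u ∨ a ≠ v ∧ b ≠ v) : G.Adj a b := by
  simp only [sup_adj, edge_adj] at h
  grind

theorem of_sup_edge [Fintype V] (hV : 2 < Fintype.card V) {u v : V}
    (hH : TwoConnected (G ⊔ edge u v))
    (h : ∀ c, c ≠ u → c ≠ v → ReachAvoid G c u v) : TwoConnected G := by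
  rw [iff_reachAvoid_of_two_lt_card hV] at *
  intro d x y hx hy
  have hR := hH d x y hx hy
  by_cases hdu : d = u
  · exact hR.mono fun a b hab ha hb => adj_of_sup_edge hab (.inl (by grind))
  by_cases hdv : d = v
  · exact hR.mono fun a b hab ha hb => adj_of_sup_edge hab (.inr (by grind))
  have huv := h d hdu hdv
  refine ReachAvoid.lift id (fun a b hab ha hb => ?_) hR
  simp only [sup_adj, edge_adj] at hab
  obtain hab | ⟨⟨rfl, rfl⟩ | ⟨rfl, rfl⟩, -⟩ := hab
  · exact .step hab ha hb
  · exact huv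
  · exact huv.symm

theorem LastCut.unique [Fintype V] (hV : 2 < Fintype.card V) {u v c d : V}
    (hc : LastCut u v c G) (hd : LastCut u v d G) : c = d := by
  by_contra hcd
  have hH := (iff_reachAvoid_of_two_lt_card hV).1 hc.sup_edge
  by_cases hv : u = v
  · exact hc.not_reach (hv ▸ .refl)
  have hdv : ¬ ReachAvoid G c v d := fun h =>
    hd.not_reach (hc.reach d (Ne.symm hcd) hd.ne_right h)
  have := (hH u v c (Ne.symm hv) hc.ne_left).to_cut
    (fun a b hab ha hb => adj_of_sup_edge hab (.inl ⟨ha, hb⟩)) hc.ne_right.symm hdv (Ne.symm hcd)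
  exact hc.not_reach (hd.reach c hcd hc.ne_right this)

theorem exists_lastCut [Fintype V] (hV : 2 < Fintype.card V) {u v : V}
    (hH : TwoConnected (G ⊔ edge u v)) (hG : ¬ TwoConnected G) : ∃ c, LastCut u v c G := by
  have hcut : ∃ c, c ≠ u ∧ c ≠ v ∧ ¬ ReachAvoid G c u v := by
    by_contra! h
    exact hG (of_sup_edge hV hH h)
  obtain ⟨c, ⟨hcu, hcv, hc⟩, hmin⟩ := Set.exists_min_image
    {c | c ≠ u ∧ c ≠ v ∧ ¬ ReachAvoid G c u v}
    (fun c => {z | ReachAvoid G c v z}.ncard) (Set.toFinite _) hcut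
  have huv : u ≠ v := by
    rintro rfl
    exact hc .refl
  refine ⟨c, hcu, hcv, hH, hc, fun d hdc hdv hd => ?_⟩
  by_contra hduv
  have hdu : d ≠ u := by
    rintro rfl
    exact hc hd.symm
  refine (hmin d ⟨hdu, hdv, hduv⟩).not_gt (Set.ncard_lt_ncard ?_ (Set.toFinite _))
  refine ⟨fun z hz => hz.change fun hdc' => hduv ?_,
    fun hss => (show ReachAvoid G d v d from hss hd).ne_right hdv.symm rfl⟩
  have hH' := (iff_reachAvoid_of_two_lt_card hV).1 hH
  exact ((hH' v u c huv hcv).to_cut (fun a b hab ha hb => adj_of_sup_edge hab (.inr ⟨ha, hb⟩))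
    hcu.symm (fun h => hc (h.trans hd.symm)) hdc).trans hdc'.symm

theorem LastCut.not_twoConnected [Nontrivial V] {u v c : V} (h : LastCut u v c G) :
    ¬ TwoConnected G := fun hG =>
  h.not_reach ((iff_reachAvoid.1 hG).2 c u v h.ne_left.symm h.ne_right.symm)

open scoped symmDiff in
theorem LastCut.symmDiff_edge [Fintype V] (hV : 2 < Fintype.card V) {u v c w : V}
    (h : LastCut u v c G) (hw : G.Adj u w) (hwc : w ≠ c) :
    LastCut u v c (G ∆ edge u c) := by
  have hadj : ∀ a b, (G ∆ edge u c).Adj a b ↔ (G.Adj a b ∧ ¬ ((a = u ∧ b = c) ∨ (a = c ∧ b = u)) ∨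
      (((a = u ∧ b = c) ∨ (a = c ∧ b = u)) ∧ ¬ G.Adj a b)) := by
    intro a b
    have := h.ne_left
    simp only [symmDiff_def, sup_adj, sdiff_adj, edge_adj]
    grind
  set G' := G ∆ edge u c with hG'
  have hH := (iff_reachAvoid_of_two_lt_card hV).1 h.sup_edge
  obtain ⟨hcu, hcv, -, hnot, hreach⟩ := h
  have huv : u ≠ v := by
    rintro rfl
    exact hnot .refl
  have hGG' : ∀ {x y}, ReachAvoid G' c x y ↔ ReachAvoid G c x y :=
    ⟨fun h => h.mono (by grind), fun h => h.mono (by grind)⟩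
  have hHG' : ∀ a b, (G ⊔ edge u v).Adj a b → a ≠ u → b ≠ u → G'.Adj a b := by
    intro a b hab ha hb
    have := adj_of_sup_edge hab (.inl ⟨ha, hb⟩)
    grind
  have huw : ReachAvoid G c u w := .step hw hcu.symm hwc
  have hout : ∀ d, d ≠ c → ¬ ReachAvoid G c u d → ReachAvoid G' d u c := by
    intro d hdc hd
    have hdu : u ≠ d := by
      rintro rfl
      exact hd .refl
    have hdw : w ≠ d := by
      rintro rfl
      exact hd huw
    have h1 : ReachAvoid G' d u w := .step (by grind) hdu hdw
    exact h1.trans ((hH u w c hw.ne' hcu).to_cut hHG' hwc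
      (fun h => hd (huw.trans (hGG'.1 h))) hdc)
  refine ⟨hcu, hcv, ?_, fun h => hnot (hGG'.1 h), fun d hdc hdv hd => ?_⟩
  · rw [iff_reachAvoid_of_two_lt_card hV]
    have hkey : ∀ d, d ≠ c → d ≠ u → ReachAvoid (G' ⊔ edge u v) d u c := by
      intro d hdc hdu
      by_cases hd : ReachAvoid G c u d
      · have hvd : v ≠ d := by
          rintro rfl
          exact hnot hd
        have h1 : ReachAvoid (G' ⊔ edge u v) d u v :=
          .step (by simp [edge_adj, huv]) hdu.symm hvd
        have h2 : ReachAvoid G' d v c := (hH u v c huv.symm hcu).to_cut hHG' hcv.symm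
          (fun h => hnot (hd.trans (hGG'.1 h).symm)) hdc
        exact h1.trans (h2.mono fun a b hab _ _ => .inl hab)
      · exact (hout d hdc hd).mono fun a b hab _ _ => .inl hab
    intro d x y hx hy
    refine ReachAvoid.lift id (fun a b hab ha hb => ?_) (hH d x y hx hy)
    by_cases h' : (G' ⊔ edge u v).Adj a b
    · exact .step h' ha hb
    have : a = u ∧ b = c ∨ a = c ∧ b = u := by
      simp only [sup_adj] at hab h'
      grind
    obtain ⟨rfl, rfl⟩ | ⟨rfl, rfl⟩ := this
    · exact hkey d hb.symm ha.symm
    · exact (hkey d ha.symm hb.symm).symm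
  · have hd' := hGG'.1 hd
    have huc := hout d hdc fun h => hnot (h.trans hd'.symm)
    refine ReachAvoid.lift id (fun a b hab ha hb => ?_) (hreach d hdc hdv hd')
    by_cases h' : G'.Adj a b
    · exact .step h' ha hb
    have : a = u ∧ b = c ∨ a = c ∧ b = u := by grind
    obtain ⟨rfl, rfl⟩ | ⟨rfl, rfl⟩ := this
    · exact huc
    · exact huc.symm

/-- The sign `(-1) ^ e(G)` of a graph. -/
noncomputable def edgeSign (G : SimpleGraph V) : ℤ := (-1) ^ Nat.card G.edgeSet

theorem edgeSign_sup_edge [Finite V] {a b : V} (hab : a ≠ b) (h : ¬ G.Adj a b) :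
    edgeSign (G ⊔ edge a b) = -edgeSign G := by
  have : (G ⊔ edge a b).edgeSet = insert s(a, b) G.edgeSet := by
    rw [edgeSet_sup, edgeSet_edge_of_ne hab, Set.union_comm, Set.insert_eq]
  rw [edgeSign, edgeSign, Nat.card_coe_set_eq, Nat.card_coe_set_eq, this,
    Set.ncard_insert_of_notMem (by simpa using h) (Set.toFinite _), pow_succ]
  ring

open scoped symmDiff in
theorem edgeSign_symmDiff_edge [Finite V] {a b : V} (hab : a ≠ b) :
    edgeSign (G ∆ edge a b) = -edgeSign G := by
  by_cases h : G.Adj a b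
  · have hle : edge a b ≤ G := by
      intro x y hxy
      rw [edge_adj] at hxy
      obtain ⟨⟨rfl, rfl⟩ | ⟨rfl, rfl⟩, -⟩ := hxy
      exacts [h, h.symm]
    rw [symmDiff_of_ge hle]
    conv_rhs => rw [← sdiff_sup_cancel hle]
    rw [edgeSign_sup_edge hab (by simp [sdiff_adj, edge_adj, hab]), neg_neg]
  · have hd : Disjoint G (edge a b) := by
      rw [disjoint_edge]
      exact h
    rw [hd.symmDiff_eq_sup, edgeSign_sup_edge hab h]

open scoped symmDiff in
/-- The signed count of a family of graphs closed under toggling an edge vanishes. -/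
theorem sum_edgeSign_eq_zero [Finite V] [Fintype (SimpleGraph V)] {a b : V} (hab : a ≠ b)
    (P : SimpleGraph V → Prop) [DecidablePred P]
    (hP : ∀ G, P G → P (G ∆ edge a b)) :
    ∑ G with P G, edgeSign G = 0 := by
  refine Finset.sum_involution (fun G _ => G ∆ edge a b) ?_ ?_ ?_ ?_
  · intro G _
    rw [edgeSign_symmDiff_edge hab, add_neg_cancel]
  · intro G _ _ h
    have := edgeSign_symmDiff_edge (G := G) hab
    rw [h, edgeSign] at this
    have h0 : (-1 : ℤ) ^ Nat.card G.edgeSet ≠ 0 := by simp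
    omega
  · intro G hG
    simpa using hP G (by simpa using hG)
  · intro G _
    exact symmDiff_symmDiff_cancel_right _ _

open scoped symmDiff in
theorem sum_edgeSign_eq_neg_sum_lastCut [Fintype V] [Fintype (SimpleGraph V)]
    (hV : 2 < Fintype.card V) {u v : V} (huv : u ≠ v) :
    ∑ G : SimpleGraph V with TwoConnected G, edgeSign G =
      -∑ c, ∑ G with LastCut u v c G, edgeSign G := by
  have : Nontrivial V := ⟨u, v, huv⟩
  have hzero := sum_edgeSign_eq_zero huv (fun G => TwoConnected (G ⊔ edge u v)) fun G hG => by
    have : G ∆ edge u v ⊔ edge u v = G ⊔ edge u v := by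
      rw [symmDiff_def, sup_assoc, sup_eq_right.2 (sdiff_le : edge u v \ G ≤ edge u v),
        sdiff_sup_self]
    rwa [this]
  rw [← Finset.sum_filter_add_sum_filter_not _ (fun G => TwoConnected G), Finset.filter_filter,
    Finset.filter_filter] at hzero
  rw [eq_neg_iff_add_eq_zero, ← hzero]
  congr 1
  · refine Finset.sum_congr (Finset.filter_congr fun G _ => ?_) fun _ _ => rfl
    exact ⟨fun h => ⟨mono le_sup_left h, h⟩, fun h => h.2⟩
  · rw [← Finset.sum_biUnion]
    · refine Finset.sum_congr ?_ fun _ _ => rfl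
      ext G
      simp only [Finset.mem_biUnion, Finset.mem_filter_univ, Finset.mem_univ, true_and]
      exact ⟨fun ⟨c, hc⟩ => ⟨hc.sup_edge, hc.not_twoConnected⟩,
        fun h => exists_lastCut hV h.1 h.2⟩
    · intro c _ d _ hcd
      refine Finset.disjoint_filter.2 fun G _ hc hd => hcd (hc.unique hV hd)

/-- The only possible neighbour of `u` is `c`. -/
def LeafAt (u c : V) (G : SimpleGraph V) : Prop := ∀ w, G.Adj u w → w = c

open scoped symmDiff in
theorem sum_lastCut_eq_sum_leaf [Fintype V] [Fintype (SimpleGraph V)]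
    (hV : 2 < Fintype.card V) {u v c : V} (hcu : c ≠ u) :
    ∑ G with LastCut u v c G, edgeSign G =
      ∑ G with LastCut u v c G ∧ LeafAt u c G, edgeSign G := by
  rw [← Finset.sum_filter_add_sum_filter_not _ (LeafAt u c),
    Finset.filter_filter, Finset.filter_filter, add_eq_left]
  refine sum_edgeSign_eq_zero hcu.symm
    (fun G => LastCut u v c G ∧ ¬ LeafAt u c G) ?_
  rintro G ⟨hG, hw⟩
  simp only [LeafAt, not_forall, exists_prop] at hw ⊢
  obtain ⟨w, hw, hwc⟩ := hw
  refine ⟨hG.symmDiff_edge hV hw hwc, w, ?_, hwc⟩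
  simp only [symmDiff_def, sup_adj, sdiff_adj, edge_adj]
  grind

/-- The graph `G` on the nonzero vertices, with a pendant edge from `0` to the vertex `c`. -/
def addLeaf {n : ℕ} (c : Fin n) (G : SimpleGraph (Fin n)) : SimpleGraph (Fin (n + 1)) :=
  G.map (Fin.succEmb n) ⊔ edge 0 c.succ

section addLeaf

variable {n : ℕ} {c v : Fin n} {G : SimpleGraph (Fin n)}

theorem not_map_succ_adj_zero {a : Fin (n + 1)} : ¬ (G.map (Fin.succEmb n)).Adj 0 a := by
  rw [map_adj]
  rintro ⟨x, y, -, hx, -⟩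
  exact Fin.succ_ne_zero x hx

theorem addLeaf_adj_succ {a b : Fin n} : (addLeaf c G).Adj a.succ b.succ ↔ G.Adj a b := by
  have := G.map_adj_apply (f := Fin.succEmb n) (a := a) (b := b)
  rw [addLeaf, sup_adj, edge_adj, ← this]
  simp

theorem addLeaf_adj_zero {a : Fin (n + 1)} : (addLeaf c G).Adj 0 a ↔ a = c.succ := by
  rw [addLeaf, sup_adj, edge_adj, or_iff_right not_map_succ_adj_zero]
  have := Fin.succ_ne_zero c
  grind

theorem edgeSign_addLeaf : edgeSign (addLeaf c G) = -edgeSign G := by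
  rw [addLeaf, edgeSign_sup_edge (Fin.succ_ne_zero c).symm not_map_succ_adj_zero, edgeSign,
    edgeSign, edgeSet_map, Nat.card_coe_set_eq, Nat.card_coe_set_eq,
    Set.ncard_image_of_injective _ (Function.Embedding.injective _)]

theorem comap_addLeaf : (addLeaf c G).comap Fin.succ = G := by
  ext a b
  exact addLeaf_adj_succ

theorem addLeaf_comap {K : SimpleGraph (Fin (n + 1))} (h : ∀ w, K.Adj 0 w ↔ w = c.succ) :
    addLeaf c (K.comap Fin.succ) = K := by
  ext a b
  cases a using Fin.cases with
  | zero => rw [addLeaf_adj_zero, h]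
  | succ a =>
    cases b using Fin.cases with
    | zero => rw [adj_comm, addLeaf_adj_zero, K.adj_comm, h]
    | succ b => exact addLeaf_adj_succ

theorem adj_zero_iff {K : SimpleGraph (Fin (n + 1))} (hV : 2 < Fintype.card (Fin (n + 1)))
    (hK : LastCut 0 v.succ c.succ K) (hleaf : LeafAt 0 c.succ K) (w : Fin (n + 1)) :
    K.Adj 0 w ↔ w = c.succ := by
  refine ⟨hleaf w, ?_⟩
  rintro rfl
  have h := (iff_reachAvoid_of_two_lt_card hV).1 hK.sup_edge v.succ 0 c.succ
    (Fin.succ_ne_zero v).symm hK.ne_right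
  obtain h | ⟨w, hw, -⟩ := h.cases_head
  · exact (hK.ne_left h.symm).elim
  have hw' := adj_of_sup_edge hw.1 (.inr hw.2)
  exact hleaf w hw' ▸ hw'

theorem lastCut_addLeaf_iff (hn : 2 ≤ n) (hcv : c ≠ v) :
    LastCut 0 v.succ c.succ (addLeaf c G) ↔ TwoConnected G := by
  have : Nontrivial (Fin n) := Fin.nontrivial_iff_two_le.2 hn
  have hV : 2 < Fintype.card (Fin (n + 1)) := by simp; omega
  set H := addLeaf c G ⊔ edge 0 v.succ with hHdef
  have hsucc : ∀ a b, H.Adj a.succ b.succ ↔ G.Adj a b := by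
    intro a b
    rw [hHdef, sup_adj, addLeaf_adj_succ, edge_adj]
    simp
  have hzero : ∀ a, H.Adj 0 a ↔ a = c.succ ∨ a = v.succ := by
    intro a
    rw [hHdef, sup_adj, addLeaf_adj_zero, edge_adj]
    grind
  have hcv' : c.succ ≠ v.succ := by simpa
  rw [iff_reachAvoid]
  constructor
  · rintro ⟨-, -, hH, -, hreach⟩
    rw [iff_reachAvoid_of_two_lt_card hV] at hH
    have project : ∀ (K : SimpleGraph (Fin (n + 1))) (d t : Fin n) (x y : Fin (n + 1)),
        (∀ a b, K.Adj a.succ b.succ → G.Adj a b) →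
        (∀ a, K.Adj 0 a.succ → a ≠ d → ReachAvoid G d t a) →
        ReachAvoid K d.succ x y → ReachAvoid G d (Fin.cases t id x) (Fin.cases t id y) := by
      intro K d t x y hK h0 h
      refine h.lift (Fin.cases t id) fun a b hab ha hb => ?_
      cases a using Fin.cases with
      | zero =>
        cases b using Fin.cases with
        | zero => exact (K.irrefl hab).elim
        | succ b => exact h0 b hab (by simpa using hb)
      | succ a =>
        cases b using Fin.cases with
        | zero => exact (h0 a hab.symm (by simpa using ha)).symm
        | succ b => exact .step (hK a b hab) (by simpa using ha) (by simpa using hb)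
    have hc : ∀ x y : Fin n, x ≠ c → y ≠ c → ReachAvoid G c x y := fun x y hx hy =>
      project H c v x.succ y.succ (fun a b => (hsucc a b).1)
        (fun a ha hac => by
          obtain rfl : a = v := by simpa [hac] using (hzero a.succ).1 ha
          exact .refl)
        (hH _ _ _ (by simpa) (by simpa))
    refine ⟨fun x y => ?_, fun d x y hx hy => ?_⟩
    · suffices ∀ z, ReachAvoid H 0 x.succ z → ∀ y : Fin n, z = y.succ → G.Reachable x y from
        this _ (hH 0 _ _ (Fin.succ_ne_zero x) (Fin.succ_ne_zero y)) y rfl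
      intro z hz
      induction hz with
      | refl => exact fun y hy => Fin.succ_injective _ hy ▸ .rfl
      | @tail a b _ hab ih =>
        rintro y rfl
        obtain ⟨a, rfl⟩ := Fin.exists_succ_eq.2 hab.2.1
        exact (ih a rfl).trans ((hsucc a y).1 hab.1).reachable
    by_cases hdc : d = c
    · exact hdc ▸ hc x y (hdc ▸ hx) (hdc ▸ hy)
    refine project H d c x.succ y.succ (fun a b => (hsucc a b).1) (fun a ha had => ?_)
      (hH _ _ _ (by simpa) (by simpa))
    obtain hac | hav := (hzero a.succ).1 ha
    · rw [Fin.succ_injective _ hac]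
      exact .refl
    obtain rfl := Fin.succ_injective _ hav
    refine project (addLeaf c G) d c 0 a.succ (fun _ _ => addLeaf_adj_succ.1) (fun b hb _ => ?_) <|
      hreach d.succ (by simpa) (by simpa using Ne.symm had) <|
        (hc a d (Ne.symm hcv) hdc).lift Fin.succ fun _ _ h h₁ h₂ =>
          .step (addLeaf_adj_succ.2 h) (by simpa) (by simpa)
    rw [Fin.succ_injective _ (addLeaf_adj_zero.1 hb)]
    exact .refl
  · rintro ⟨hG, hG'⟩
    have embed : ∀ d x y : Fin n, x ≠ d → y ≠ d →
        ReachAvoid (addLeaf c G) d.succ x.succ y.succ := fun d x y hx hy =>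
      (hG' d x y hx hy).lift Fin.succ fun _ _ h h₁ h₂ =>
        .step (addLeaf_adj_succ.2 h) (by simpa) (by simpa)
    have hnot : ¬ ReachAvoid (addLeaf c G) c.succ 0 v.succ := by
      suffices ∀ z, ReachAvoid (addLeaf c G) c.succ 0 z → z = 0 from
        fun h => Fin.succ_ne_zero v (this _ h)
      intro z hz
      induction hz with
      | refl => rfl
      | tail _ hab ih =>
        subst ih
        exact (hab.2.2 (addLeaf_adj_zero.1 hab.1)).elim
    have hle : addLeaf c G ≤ H := le_sup_left
    refine ⟨Fin.succ_ne_zero c, hcv', ?_, hnot, fun d hdc hdv hd => ?_⟩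
    · rw [iff_reachAvoid_of_two_lt_card hV]
      intro d
      cases d using Fin.cases with
      | zero =>
        intro x y hx hy
        obtain ⟨x, rfl⟩ := Fin.exists_succ_eq.2 hx
        obtain ⟨y, rfl⟩ := Fin.exists_succ_eq.2 hy
        exact ReflTransGen.lift Fin.succ
          (fun a b hab => ⟨(hsucc a b).2 hab, Fin.succ_ne_zero a, Fin.succ_ne_zero b⟩) _ _
          ((reachable_iff_reflTransGen x y).1 (hG x y))
      | succ d =>
        obtain ⟨t, htd, ht⟩ : ∃ t, t ≠ d ∧ H.Adj 0 t.succ := by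
          by_cases hdc : c = d
          · exact ⟨v, hdc ▸ hcv.symm, (hzero _).2 (.inr rfl)⟩
          · exact ⟨c, hdc, (hzero _).2 (.inl rfl)⟩
        have key : ∀ x, x ≠ d.succ → ReachAvoid H d.succ t.succ x := by
          intro x hx
          cases x using Fin.cases with
          | zero => exact .step ht.symm (by simpa) hx
          | succ x => exact (embed d t x htd (by simpa using hx)).mono fun _ _ h _ _ => hle h
        exact fun x y hx hy => (key x hx).symm.trans (key y hy)
    · cases d using Fin.cases with
      | zero => exact (hnot hd.symm).elim
      | succ d =>
        exact (ReachAvoid.step (addLeaf_adj_zero.2 rfl) (Fin.succ_ne_zero d).symm hdc.symm).trans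
          (embed d c v (by simpa using hdc.symm) (by simpa using hdv.symm))

theorem sum_lastCut_eq_neg (hn : 2 ≤ n) (hcv : c ≠ v) :
    ∑ G with LastCut 0 v.succ c.succ G, edgeSign G =
      -∑ G : SimpleGraph (Fin n) with TwoConnected G, edgeSign G := by
  have hV : 2 < Fintype.card (Fin (n + 1)) := by
    rw [Fintype.card_fin]
    omega
  rw [sum_lastCut_eq_sum_leaf hV (Fin.succ_ne_zero c), ← Finset.sum_neg_distrib]
  symm
  refine Finset.sum_nbij' (addLeaf c) (fun K => K.comap Fin.succ) ?_ ?_ ?_ ?_ ?_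
  · intro G hG
    rw [Finset.mem_filter_univ] at hG ⊢
    exact ⟨(lastCut_addLeaf_iff hn hcv).2 hG, fun w => addLeaf_adj_zero.1⟩
  · intro K hK
    rw [Finset.mem_filter_univ] at hK ⊢
    rw [← lastCut_addLeaf_iff hn hcv, addLeaf_comap (adj_zero_iff hV hK.1 hK.2)]
    exact hK.1
  · exact fun G _ => comap_addLeaf
  · intro K hK
    rw [Finset.mem_filter_univ] at hK
    exact addLeaf_comap (adj_zero_iff hV hK.1 hK.2)
  · exact fun G _ => edgeSign_addLeaf.symm

end addLeaf

theorem sum_edgeSign_fin_succ {n : ℕ} (hn : 2 ≤ n) :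
    ∑ G : SimpleGraph (Fin (n + 1)) with TwoConnected G, edgeSign G =
      (n - 1) * ∑ G : SimpleGraph (Fin n) with TwoConnected G, edgeSign G := by
  have hV : 2 < Fintype.card (Fin (n + 1)) := by
    rw [Fintype.card_fin]
    omega
  have : NeZero n := ⟨by omega⟩
  rw [sum_edgeSign_eq_neg_sum_lastCut hV (Fin.succ_ne_zero (0 : Fin n)).symm, Fin.sum_univ_succ,
    Finset.sum_eq_zero fun G hG => ((Finset.mem_filter_univ _).1 hG).ne_left.elim rfl, zero_add,
    ← Finset.add_sum_erase _ _ (Finset.mem_univ 0),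
    Finset.sum_eq_zero fun G hG => ((Finset.mem_filter_univ _).1 hG).ne_right.elim rfl, zero_add,
    Finset.sum_congr rfl fun c hc => sum_lastCut_eq_neg hn (Finset.ne_of_mem_erase hc),
    Finset.sum_const, Finset.card_erase_of_mem (Finset.mem_univ _), Finset.card_univ,
    Fintype.card_fin, nsmul_eq_mul, Nat.cast_sub (by omega)]
  push_cast
  ring

theorem fin_two_iff {G : SimpleGraph (Fin 2)} : TwoConnected G ↔ G = ⊤ := by
  rw [iff_reachAvoid]
  constructor
  · rintro ⟨h, -⟩
    have h01 : G.Adj 0 1 := by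
      obtain h | ⟨w, hw, -⟩ := ((reachable_iff_reflTransGen 0 1).1 (h 0 1)).cases_head
      · simp at h
      · obtain rfl : w = 1 := by
          have := hw.ne
          omega
        exact hw
    ext a b
    fin_cases a <;> fin_cases b <;> simp [h01, h01.symm]
  · rintro rfl
    refine ⟨fun x y => connected_top.preconnected x y, fun d x y hx hy => ?_⟩
    obtain rfl : x = y := by omega
    exact .refl

theorem sum_edgeSign (n : ℕ) :
    ∑ G : SimpleGraph (Fin (n + 2)) with TwoConnected G, edgeSign G = -(n.factorial : ℤ) := by
  induction n with
  | zero =>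
    have htop : ({G : SimpleGraph (Fin 2) | TwoConnected G} : Finset _) = {⊤} := by
      ext G
      rw [Finset.mem_filter_univ, fin_two_iff, Finset.mem_singleton]
    have : Nat.card (⊤ : SimpleGraph (Fin 2)).edgeSet = 1 := by
      rw [Nat.card_eq_fintype_card, ← edgeFinset_card, card_edgeFinset_top_eq_card_choose_two]
      simp
    rw [zero_add, htop, Finset.sum_singleton, edgeSign, this]
    simp
  | succ n ih =>
    rw [sum_edgeSign_fin_succ (by omega), ih, Nat.factorial_succ]
    push_cast
    ring

end TwoConnected

/-- The sum over all two-connected graphs on `[n]` of `(-1)^(number of edges)`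
equals `-(n-2)!`, for all `n ≥ 2`. -/
theorem twoConnected_alternating_sum (n : ℕ) (hn : 2 ≤ n) :
    ∑ G ∈ Finset.univ.filter (fun G : SimpleGraph (Fin n) => TwoConnected G),
      (-1 : ℤ) ^ (Nat.card G.edgeSet) = -(Nat.factorial (n - 2) : ℤ) := by
  obtain ⟨n, rfl⟩ := Nat.exists_eq_add_of_le' hn
  exact TwoConnected.sum_edgeSign n
end

section
/- The sum over all connected graphs on vertex set {1,...,n} of (-1)^(number of edges) equals (-1)^(n-1)·(n-1)!. -/
open scoped Classical

namespace SimpleGraph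

open Polynomial

/-- Two distinct vertices are adjacent when `f` gives them the same colour. -/
def monochromatic {V α : Type*} (f : V → α) : SimpleGraph V where
  Adj u v := u ≠ v ∧ f u = f v
  symm := ⟨fun _ _ h => ⟨h.1.symm, h.2.symm⟩⟩
  loopless := ⟨fun _ h => h.1 rfl⟩

theorem monochromatic_eq_bot_iff {V α : Type*} (f : V → α) :
    monochromatic f = ⊥ ↔ Function.Injective f := by
  constructor
  · intro h u v huv
    by_contra hne
    have : (monochromatic f).Adj u v := ⟨hne, huv⟩
    simp [h] at this
  · intro h
    ext u v
    simpa [monochromatic] using fun hne huv => hne (h huv)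

/-- Colourings constant along edges correspond to colourings of the connected components. -/
noncomputable def leMonochromaticEquiv {V : Type*} (G : SimpleGraph V) (α : Type*) :
    {f : V → α // G ≤ monochromatic f} ≃ (G.ConnectedComponent → α) where
  toFun f := ConnectedComponent.lift f.1 fun _ _ p _ => by
    induction p with
    | nil => rfl
    | cons h p ih => exact (f.2 h).2.trans (ih (by simp_all))
  invFun g := ⟨fun v => g (G.connectedComponentMk v), fun _ _ h =>
    ⟨h.ne, congrArg g (ConnectedComponent.sound h.reachable)⟩⟩
  left_inv f := rfl
  right_inv g := by
    funext c
    induction c using ConnectedComponent.ind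
    rfl

theorem card_connectedComponent_eq_one_iff {V : Type*} (G : SimpleGraph V) :
    Nat.card G.ConnectedComponent = 1 ↔ G.Connected := by
  rw [Nat.card_eq_one_iff_unique, connected_iff]
  refine and_congr ⟨fun _ u v => ConnectedComponent.exact (Subsingleton.elim _ _),
    fun h => h.subsingleton_connectedComponent⟩ ⟨fun ⟨c⟩ => ?_, fun ⟨v⟩ => ⟨G.connectedComponentMk v⟩⟩
  induction c using ConnectedComponent.ind with
  | _ v => exact ⟨v⟩

variable {V : Type*} [Fintype V]

theorem sum_le_neg_one_pow_card_edgeSet (K : SimpleGraph V) :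
    ∑ G with G ≤ K, (-1 : ℤ) ^ Nat.card G.edgeSet = if K = ⊥ then 1 else 0 := by
  have key := Finset.sum_powerset_neg_one_pow_card (x := K.edgeFinset)
  simp only [edgeFinset_eq_empty] at key
  rw [← key]
  refine Finset.sum_bij' (fun G _ => G.edgeFinset) (fun s _ => fromEdgeSet (s : Set (Sym2 V)))
    ?_ ?_ ?_ ?_ ?_
  · intro G hG
    simpa using hG
  · intro s hs
    have hs : s ⊆ K.edgeFinset := by simpa using hs
    simp only [Finset.mem_filter, Finset.mem_univ, true_and]
    intro u v huv
    simpa using hs ((fromEdgeSet_adj _).1 huv).1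
  · intro G _
    simp
  · intro s hs
    have hs : s ⊆ K.edgeFinset := by simpa using hs
    ext e
    simp only [mem_edgeFinset, edgeSet_fromEdgeSet, Set.mem_sdiff, Finset.mem_coe]
    exact ⟨fun h => h.1, fun h => ⟨h, K.not_isDiag_of_mem_edgeFinset (hs h)⟩⟩
  · intro G _
    rw [Nat.card_eq_fintype_card, ← edgeFinset_card]

/-- The subgraph expansion of the chromatic polynomial of the complete graph. -/
theorem sum_neg_one_pow_mul_card_connectedComponent_pow (q : ℕ) :
    ∑ G : SimpleGraph V, (-1 : ℤ) ^ Nat.card G.edgeSet * (q : ℤ) ^ Nat.card G.ConnectedComponent =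
      q.descFactorial (Fintype.card V) := by
  have hcard (G : SimpleGraph V) : (q : ℤ) ^ Nat.card G.ConnectedComponent =
      ∑ f : V → Fin q, if G ≤ monochromatic f then 1 else 0 := by
    have h := Fintype.card_congr (leMonochromaticEquiv G (Fin q))
    rw [Fintype.card_subtype, Fintype.card_fun, Fintype.card_fin] at h
    rw [Finset.sum_boole, Nat.card_eq_fintype_card]
    exact_mod_cast h.symm
  have hinj : Fintype.card {f : V → Fin q // Function.Injective f} =
      q.descFactorial (Fintype.card V) := by
    rw [Fintype.card_congr (Equiv.subtypeInjectiveEquivEmbedding V (Fin q)),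
      Fintype.card_embedding_eq, Fintype.card_fin]
  simp_rw [hcard, Finset.mul_sum]
  rw [Finset.sum_comm]
  simp_rw [mul_ite, mul_one, mul_zero, ← Finset.sum_filter, sum_le_neg_one_pow_card_edgeSet,
    monochromatic_eq_bot_iff]
  rw [Finset.sum_boole, ← hinj, Fintype.card_subtype]

theorem sum_C_neg_one_pow_mul_X_pow :
    ∑ G : SimpleGraph V, C ((-1 : ℤ) ^ Nat.card G.edgeSet) * X ^ Nat.card G.ConnectedComponent =
      descPochhammer ℤ (Fintype.card V) := by
  refine Polynomial.eq_of_infinite_eval_eq _ _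
    ((Set.infinite_range_of_injective (Nat.cast_injective (R := ℤ))).mono ?_)
  rintro _ ⟨q, rfl⟩
  simp only [Set.mem_ofPred_eq, eval_finsetSum, eval_mul, eval_C, eval_pow, eval_X,
    descPochhammer_eval_eq_descFactorial]
  exact sum_neg_one_pow_mul_card_connectedComponent_pow q

end SimpleGraph

theorem descPochhammer_eval_neg_one (n : ℕ) :
    (descPochhammer ℤ n).eval (-1) = (-1) ^ n * (n.factorial : ℤ) := by
  induction n with
  | zero => simp
  | succ n ih =>
    rw [descPochhammer_succ_eval, ih, Nat.factorial_succ]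
    push_cast
    ring

theorem descPochhammer_succ_coeff_one (n : ℕ) :
    (descPochhammer ℤ (n + 1)).coeff 1 = (-1) ^ n * (n.factorial : ℤ) := by
  rw [descPochhammer_succ_left, Polynomial.coeff_X_mul, Polynomial.coeff_zero_eq_eval_zero,
    Polynomial.eval_comp, ← descPochhammer_eval_neg_one]
  simp

theorem SimpleGraph.sum_connected_neg_one_pow {V : Type*} [Fintype V] {m : ℕ}
    (hV : Fintype.card V = m + 1) :
    ∑ G : SimpleGraph V with G.Connected, (-1 : ℤ) ^ Nat.card G.edgeSet =
      (-1) ^ m * (m.factorial : ℤ) := by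
  have h := congrArg (Polynomial.coeff · 1) (SimpleGraph.sum_C_neg_one_pow_mul_X_pow (V := V))
  simp only [hV, descPochhammer_succ_coeff_one, Polynomial.finsetSum_coeff,
    Polynomial.coeff_C_mul, Polynomial.coeff_X_pow, mul_ite, mul_one, mul_zero] at h
  rw [← h, Finset.sum_filter]
  refine Finset.sum_congr rfl fun G _ => ?_
  simp only [← SimpleGraph.card_connectedComponent_eq_one_iff, eq_comm (a := 1)]

/-- The sum over all connected graphs on `[n]` of `(-1)^(number of edges)`
equals `(-1)^(n-1) * (n-1)!`. -/
theorem connected_alternating_sum (n : ℕ) (hn : 1 ≤ n) :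
    ∑ G ∈ Finset.univ.filter (fun G : SimpleGraph (Fin n) => G.Connected),
      (-1 : ℤ) ^ (Nat.card G.edgeSet) = (-1) ^ (n - 1) * (Nat.factorial (n - 1) : ℤ) := by
  convert SimpleGraph.sum_connected_neg_one_pow (V := Fin n) (m := n - 1) ?_
  rw [Fintype.card_fin, Nat.sub_add_cancel hn]
end

section
/- The sum over all connected graphs G on vertex set {1,...,n} of (-1)^(e(G)) times the volume of the polytope Π_G equals (-1)^(n-1)·n^(n-1), where Π_G = { (x_2,...,x_n) ∈ ℝ^(n-1) : |x_i - x_j| < 1 for all edges {i,j} of G }, with x_1 = 0. -/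
open scoped Classical
open MeasureTheory

/-- The polytope `Π_G` associated with a graph `G` on `{1, ..., n+1}`:
points `(x_2, ..., x_{n+1}) ∈ ℝ^n` with `x_1 := 0` and `|x_i - x_j| < 1`
for every edge `{i,j}` of `G`. -/
def graphPolytope (n : ℕ) (G : SimpleGraph (Fin (n + 1))) : Set (Fin n → ℝ) :=
  {y | ∀ i j : Fin (n + 1), G.Adj i j →
    |(Fin.cons (0 : ℝ) y : Fin (n + 1) → ℝ) i - (Fin.cons (0 : ℝ) y : Fin (n + 1) → ℝ) j| < 1}

open Finset in
theorem sum_le_neg_one_pow_card_edgeSet {V : Type*} [Fintype V] [DecidableEq V] (W : SimpleGraph V) :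
    ∑ G : SimpleGraph V with G ≤ W, (-1 : ℝ) ^ Nat.card G.edgeSet = if W = ⊥ then 1 else 0 := by
  have h : ∑ G : SimpleGraph V with G ≤ W, (-1 : ℝ) ^ Nat.card G.edgeSet =
      ∑ t ∈ W.edgeFinset.powerset, (-1 : ℝ) ^ #t := by
    refine Finset.sum_bij' (fun G _ => G.edgeFinset)
      (fun t _ => SimpleGraph.fromEdgeSet (t : Set (Sym2 V))) ?_ ?_ ?_ ?_ ?_
    · intro G hG
      simpa using hG
    · intro t ht
      simp only [Finset.mem_filter, Finset.mem_univ, true_and]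
      rw [← SimpleGraph.edgeSet_subset_edgeSet, SimpleGraph.edgeSet_fromEdgeSet]
      intro e he
      have := Finset.mem_powerset.1 ht (Finset.mem_coe.1 he.1)
      simpa using this
    · intro G _
      simp
    · intro t ht
      ext e
      simp only [SimpleGraph.mem_edgeFinset, SimpleGraph.edgeSet_fromEdgeSet]
      constructor
      · exact fun he => by simpa using he.1
      · intro he
        refine ⟨by simpa using he, fun hd => ?_⟩
        have hW := Finset.mem_powerset.1 ht he
        exact W.not_isDiag_of_mem_edgeFinset hW hd
    · intro G _
      rw [Nat.card_eq_fintype_card, SimpleGraph.edgeFinset_card]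
  rw [h]
  have h2 := Finset.sum_powerset_neg_one_pow_card (x := W.edgeFinset)
  have h3 : W.edgeFinset = ∅ ↔ W = ⊥ := SimpleGraph.edgeFinset_eq_empty
  simp only [h3] at h2
  exact_mod_cast h2

theorem card_constant_on_edges {V : Type*} [Fintype V] [DecidableEq V] (G : SimpleGraph V) (q : ℕ) :
    Fintype.card {f : V → Fin q // ∀ i j, G.Adj i j → f i = f j} =
      q ^ Fintype.card G.ConnectedComponent := by
  rw [← Fintype.card_fin q, ← Fintype.card_fun, Fintype.card_fin]
  refine Fintype.card_congr
    { toFun := fun f => SimpleGraph.ConnectedComponent.lift f.1 ?_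
      invFun := fun g => ⟨fun v => g (G.connectedComponentMk v), ?_⟩
      left_inv := fun f => by ext; simp
      right_inv := fun g => ?_ }
  · intro v w p _
    induction p with
    | nil => rfl
    | cons h p ih => exact (f.2 _ _ h).trans (ih ((SimpleGraph.Walk.cons_isPath_iff _ _).1 ‹_›).1)
  · intro i j h
    exact congrArg g (SimpleGraph.ConnectedComponent.sound h.reachable)
  · ext c
    induction c using SimpleGraph.ConnectedComponent.ind
    simp

open Finset in
theorem sum_le_neg_one_pow_mul_pow_card_connectedComponent {V : Type*} [Fintype V] [DecidableEq V]
    (U : SimpleGraph V) (q : ℕ) :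
    ∑ G : SimpleGraph V with G ≤ U,
      (-1 : ℝ) ^ Nat.card G.edgeSet * (q : ℝ) ^ Fintype.card G.ConnectedComponent =
      Nat.card {f : V → Fin q // ∀ i j, U.Adj i j → f i ≠ f j} := by
  calc
    _ = ∑ G : SimpleGraph V with G ≤ U, ∑ f : V → Fin q,
        if ∀ i j, G.Adj i j → f i = f j then (-1 : ℝ) ^ Nat.card G.edgeSet else 0 := by
      refine Finset.sum_congr rfl fun G _ => ?_
      rw [← Finset.sum_filter, Finset.sum_const, nsmul_eq_mul, mul_comm, ← Fintype.card_subtype,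
        card_constant_on_edges, Nat.cast_pow]
    _ = ∑ f : V → Fin q, ∑ G : SimpleGraph V with G ≤ U ∧
          ∀ i j, G.Adj i j → f i = f j, (-1 : ℝ) ^ Nat.card G.edgeSet := by
      rw [Finset.sum_comm]
      refine Finset.sum_congr rfl fun f _ => ?_
      rw [← Finset.sum_filter, Finset.filter_filter]
    _ = ∑ f : V → Fin q, if ∀ i j, U.Adj i j → f i ≠ f j then (1 : ℝ) else 0 := by
      refine Finset.sum_congr rfl fun f _ => ?_
      let W : SimpleGraph V :=
        { Adj := fun i j => U.Adj i j ∧ f i = f j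
          symm := ⟨fun i j h => ⟨h.1.symm, h.2.symm⟩⟩
          loopless := ⟨fun i h => U.loopless.irrefl i h.1⟩ }
      have hW : ∀ G : SimpleGraph V, (G ≤ U ∧
          ∀ i j, G.Adj i j → f i = f j) ↔ G ≤ W := by
        intro G
        exact ⟨fun h i j hij => ⟨h.1 hij, h.2 i j hij⟩,
          fun h => ⟨fun i j hij => (h hij).1, fun i j hij => (h hij).2⟩⟩
      have hbot : W = ⊥ ↔ ∀ i j, U.Adj i j → f i ≠ f j := by
        constructor
        · intro h i j hij hf
          have : W.Adj i j := ⟨hij, hf⟩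
          rw [h] at this
          exact this
        · intro h
          ext i j
          exact ⟨fun hij => h i j hij.1 hij.2, fun hij => absurd hij (by simp)⟩
      simp only [hW, sum_le_neg_one_pow_card_edgeSet, hbot]
    _ = _ := by
      rw [Finset.sum_boole, Nat.card_eq_fintype_card, Fintype.card_subtype]

/-- The number of points of the configuration `x` lying in the open interval `(x i - 1, x i)`. -/
noncomputable def pointsBelow {V : Type*} [Fintype V] (x : V → ℝ) (i : V) : ℝ :=
  ∑ j, if 0 < x i - x j ∧ x i - x j < 1 then 1 else 0

open Finset in
theorem card_proper_colorings_eq_prod {m : ℕ} (x : Fin m → ℝ) (hx : Function.Injective x)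
    (q : ℕ) :
    (Nat.card {f : Fin m → Fin q // ∀ i j, 0 < x i - x j → x i - x j < 1 → f i ≠ f j} : ℝ) =
      ∏ i, ((q : ℝ) - pointsBelow x i) := by
  simp only [Nat.card_eq_fintype_card, Fintype.card_subtype]
  induction m with
  | zero => simp
  | succ m ih =>
    obtain ⟨a, ha⟩ := Finite.exists_max x
    have ha' : ∀ j, 0 < x a - x (a.succAbove j) := fun j =>
      sub_pos.2 <| lt_of_le_of_ne (ha _) fun h => Fin.succAbove_ne a j (hx h)
    have hlow : ∀ j, pointsBelow x (a.succAbove j) = pointsBelow (x ∘ a.succAbove) j := fun j => by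
      have := ha' j
      simp only [pointsBelow, Fin.sum_univ_succAbove _ a, Function.comp]
      rw [if_neg (fun h => by linarith [h.1]), zero_add]
    have htop : pointsBelow x a = #{j : Fin m | x a - x (a.succAbove j) < 1} := by
      simp only [pointsBelow, Fin.sum_univ_succAbove _ a, ha', true_and]
      simp
    have hproper : ∀ (c : Fin q) (g : Fin m → Fin q),
        (∀ i j, 0 < x i - x j → x i - x j < 1 →
          a.insertNth (α := fun _ => Fin q) c g i ≠ a.insertNth (α := fun _ => Fin q) c g j) ↔
        (∀ i j, 0 < (x ∘ a.succAbove) i - (x ∘ a.succAbove) j →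
          (x ∘ a.succAbove) i - (x ∘ a.succAbove) j < 1 → g i ≠ g j) ∧
        ∀ j, x a - x (a.succAbove j) < 1 → c ≠ g j := by
      intro c g
      constructor
      · intro h
        exact ⟨fun i j h1 h2 => by simpa using h _ _ h1 h2,
          fun j hj => by simpa using h _ _ (ha' j) hj⟩
      · rintro ⟨h1, h2⟩ i j
        cases i using Fin.succAboveCases a with
        | x =>
          cases j using Fin.succAboveCases a with
          | x => simp
          | p j => simpa using fun _ => h2 j
        | p i =>
          cases j using Fin.succAboveCases a with
          | x => exact fun h => absurd h (by linarith [ha' i])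
          | p j => simpa using h1 i j
    have hcount : ∀ g : Fin m → Fin q,
        (∀ i j, 0 < (x ∘ a.succAbove) i - (x ∘ a.succAbove) j →
          (x ∘ a.succAbove) i - (x ∘ a.succAbove) j < 1 → g i ≠ g j) →
        (#{c : Fin q | ∀ j, x a - x (a.succAbove j) < 1 → c ≠ g j} : ℝ) =
          q - pointsBelow x a := by
      intro g hg
      have hinj : Set.InjOn g (Finset.filter (fun j => x a - x (a.succAbove j) < 1) univ) := by
        intro i hi j hj hij
        simp only [coe_filter, mem_univ, true_and, Set.mem_ofPred_eq] at hi hj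
        rcases lt_trichotomy (x (a.succAbove i)) (x (a.succAbove j)) with h | h | h
        · exact absurd hij.symm (hg j i (sub_pos.2 h) (by simp; linarith [ha' j]))
        · exact Fin.succAbove_right_injective (hx h)
        · exact absurd hij (hg i j (sub_pos.2 h) (by simp; linarith [ha' i]))
      have hset : Finset.filter (fun c => ∀ j, x a - x (a.succAbove j) < 1 → c ≠ g j) univ =
          (image g (Finset.filter (fun j => x a - x (a.succAbove j) < 1) univ))ᶜ := by
        ext c
        simp only [mem_filter, mem_univ, true_and, mem_compl, mem_image, not_exists, not_and]
        exact forall_congr' fun j => imp_congr_right fun _ => ne_comm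
      rw [hset, card_compl, Nat.cast_sub (card_le_univ _), card_image_of_injOn hinj, htop,
        Fintype.card_fin]
    rw [Fin.prod_univ_succAbove _ a]
    simp only [hlow]
    rw [← ih _ (hx.comp Fin.succAbove_right_injective), ← Finset.sum_boole,
      ← (Fin.insertNthEquiv (fun _ => Fin q) a).sum_comp, Fintype.sum_prod_type_right,
      ← Finset.sum_boole, Finset.mul_sum]
    refine Finset.sum_congr rfl fun g _ => ?_
    simp only [Fin.insertNthEquiv_apply, hproper]
    split_ifs with h
    · simp only [and_iff_right h]
      rw [← hcount g h, Finset.sum_boole, mul_one]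
    · rw [mul_zero]
      exact Finset.sum_eq_zero fun c _ => if_neg fun hc => h hc.1

/-- The graph joining two points of a configuration at distance less than one. -/
def unitIntervalGraph {V : Type*} (x : V → ℝ) : SimpleGraph V where
  Adj i j := i ≠ j ∧ |x i - x j| < 1
  symm := ⟨fun i j h => ⟨h.1.symm, by rw [abs_sub_comm]; exact h.2⟩⟩
  loopless := ⟨fun _ h => h.1 rfl⟩

theorem card_connectedComponent_eq_one_iff {V : Type*} [Fintype V] [DecidableEq V]
    (G : SimpleGraph V) : Fintype.card G.ConnectedComponent = 1 ↔ G.Connected := by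
  rw [Fintype.card_eq_one_iff]
  constructor
  · rintro ⟨c, hc⟩
    obtain ⟨v, -⟩ := c.exists_rep
    exact (SimpleGraph.connected_iff_exists_forall_reachable G).2
      ⟨v, fun w => SimpleGraph.ConnectedComponent.exact ((hc _).trans (hc _).symm)⟩
  · intro h
    have := h.preconnected.subsingleton_connectedComponent
    obtain ⟨v⟩ := h.nonempty
    exact ⟨G.connectedComponentMk v, fun _ => Subsingleton.elim _ _⟩

theorem unitIntervalGraph_proper_iff {V α : Type*} {x : V → ℝ} (hx : Function.Injective x)
    (f : V → α) :
    (∀ i j, (unitIntervalGraph x).Adj i j → f i ≠ f j) ↔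
      ∀ i j, 0 < x i - x j → x i - x j < 1 → f i ≠ f j := by
  constructor
  · intro h i j h0 h1
    refine h i j ⟨?_, by rwa [abs_of_pos h0]⟩
    rintro rfl
    simp at h0
  · rintro h i j ⟨hne, hlt⟩
    rw [abs_lt] at hlt
    rcases lt_or_gt_of_ne (hx.ne hne) with hij | hij
    · exact (h j i (by linarith) (by linarith)).symm
    · exact h i j (by linarith) (by linarith)

open Polynomial in
theorem sum_connected_le_unitIntervalGraph {m : ℕ} {x : Fin m → ℝ} (hx : Function.Injective x) :
    ∑ G : SimpleGraph (Fin m) with G.Connected ∧ G ≤ unitIntervalGraph x,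
      (-1 : ℝ) ^ Nat.card G.edgeSet =
      ∑ r, ∏ i ∈ Finset.univ.erase r, -pointsBelow x i := by
  have hpoly : ∑ G : SimpleGraph (Fin m) with G ≤ unitIntervalGraph x,
      C ((-1 : ℝ) ^ Nat.card G.edgeSet) * X ^ Fintype.card G.ConnectedComponent =
      ∏ i, (X - C (pointsBelow x i)) := by
    refine eq_of_infinite_eval_eq _ _ <|
      (Set.infinite_range_of_injective (Nat.cast_injective (R := ℝ))).mono ?_
    rintro _ ⟨q, rfl⟩
    have h := sum_le_neg_one_pow_mul_pow_card_connectedComponent (unitIntervalGraph x) q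
    rw [Nat.card_congr (Equiv.subtypeEquivRight (unitIntervalGraph_proper_iff hx)),
      card_proper_colorings_eq_prod x hx] at h
    rw [Set.mem_ofPred_eq, eval_finsetSum, eval_prod]
    simpa only [eval_mul, eval_C, eval_pow, eval_X, eval_sub] using h
  have hcoeff := congrArg (fun P : ℝ[X] => P.derivative.eval 0) hpoly
  simp only [derivative_prod_finset, derivative_X_sub_C, mul_one, eval_finsetSum, eval_prod,
    eval_sub, eval_X, eval_C, zero_sub] at hcoeff
  rw [← hcoeff, ← coeff_zero_eq_eval_zero, coeff_derivative, finsetSum_coeff]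
  simp only [coeff_C_mul_X_pow, zero_add, Nat.cast_zero, mul_one,
    @eq_comm ℕ 1]
  rw [← Finset.sum_filter, Finset.filter_filter]
  exact Finset.sum_congr (Finset.filter_congr fun G _ =>
    and_comm.trans (and_congr_right' (card_connectedComponent_eq_one_iff G).symm)) fun _ _ => rfl

/-- The matrix of the linear map sending `y`, extended by the coordinate `0`, to the vector of
differences between each coordinate and the coordinate of its parent. -/
def parentMatrix {n : ℕ} (p : Fin n → Fin (n + 1)) : Matrix (Fin n) (Fin n) ℝ :=
  Matrix.of fun i j => (if i = j then (1 : ℝ) else 0) - if p i = j.succ then 1 else 0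

theorem sum_det_parentMatrix (n : ℕ) :
    ∑ p : Fin n → Fin (n + 1), (parentMatrix p).det * (n + 1) = (n + 1 : ℝ) ^ n := by
  have h := (Matrix.detRowAlternating (n := Fin n) (R := ℝ)).toMultilinearMap.map_sum
    (fun (i : Fin n) (c : Fin (n + 1)) (j : Fin n) =>
      (if i = j then (1 : ℝ) else 0) - if c = j.succ then 1 else 0)
  rw [← Finset.sum_mul]
  have hm : (fun i : Fin n => ∑ c : Fin (n + 1), fun j : Fin n =>
      (if i = j then (1 : ℝ) else 0) - if c = j.succ then 1 else 0) =
      ((n + 1 : ℝ) • (1 + Matrix.replicateCol Unit (fun _ : Fin n => -(1 : ℝ) / (n + 1)) *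
        Matrix.replicateRow Unit (fun _ : Fin n => (1 : ℝ))) : Matrix (Fin n) (Fin n) ℝ) := by
    ext i j
    have : (n : ℝ) + 1 ≠ 0 := by positivity
    simp [Matrix.mul_apply, Matrix.one_apply, Finset.sum_apply]
    split_ifs <;> field_simp <;> ring
  refine (congrArg (· * (n + 1 : ℝ)) h).symm.trans ?_
  rw [hm]
  change Matrix.det _ * _ = _
  have : (n : ℝ) + 1 ≠ 0 := by positivity
  rw [Matrix.det_smul, Matrix.det_one_add_replicateCol_mul_replicateRow]
  simp [dotProduct]
  field_simp
  ring

theorem parentMatrix_mulVec {n : ℕ} (p : Fin n → Fin (n + 1)) (y : Fin n → ℝ) (i : Fin n) :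
    (parentMatrix p).mulVec y i = y i - (Fin.cons 0 y : Fin (n + 1) → ℝ) (p i) := by
  simp only [parentMatrix, Matrix.mulVec, dotProduct, Matrix.of_apply, sub_mul, ite_mul, one_mul,
    zero_mul, Finset.sum_sub_distrib, Finset.sum_ite_eq, Finset.mem_univ, if_true]
  congr 1
  rcases Fin.eq_zero_or_eq_succ (p i) with h | ⟨k, h⟩
  · simp [h, (Fin.succ_ne_zero _).symm]
  · simp [h]

/-- The configurations in which every coordinate exceeds that of its parent by less than one. -/
def parentPolytope {n : ℕ} (p : Fin n → Fin (n + 1)) : Set (Fin n → ℝ) :=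
  {y | ∀ i, 0 < y i - (Fin.cons 0 y : Fin (n + 1) → ℝ) (p i) ∧
    y i - (Fin.cons 0 y : Fin (n + 1) → ℝ) (p i) < 1}

theorem parentPolytope_eq_preimage {n : ℕ} (p : Fin n → Fin (n + 1)) :
    parentPolytope p =
      Matrix.toLin' (parentMatrix p) ⁻¹' Set.univ.pi fun _ => Set.Ioo (0 : ℝ) 1 := by
  ext y
  simp [parentPolytope, Set.mem_pi, parentMatrix_mulVec]

theorem det_parentMatrix_of_mem {n : ℕ} {p : Fin n → Fin (n + 1)} {y : Fin n → ℝ}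
    (hy : y ∈ parentPolytope p) : (parentMatrix p).det = 1 := by
  have hlt : ∀ i j, p i = j.succ → y j < y i := by
    intro i j h
    have := (hy i).1
    rw [h, Fin.cons_succ] at this
    linarith
  have ht : (parentMatrix p).BlockTriangular (fun i => -y i) := by
    intro i j hij
    have h1 : i ≠ j := by rintro rfl; exact lt_irrefl _ hij
    have h2 : p i ≠ j.succ := fun h => by linarith [hlt i j h]
    simp [parentMatrix, h1, h2]
  rw [ht.det]
  refine Finset.prod_eq_one fun a _ => ?_
  have : (parentMatrix p).toSquareBlock (fun i => -y i) a = 1 := by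
    ext ⟨i, hi⟩ ⟨j, hj⟩
    have h2 : p i ≠ j.succ := fun h => by linarith [hlt i j h]
    simp [Matrix.toSquareBlock_def, parentMatrix, h2, Matrix.one_apply]
  rw [this, Matrix.det_one]

theorem volume_parentPolytope {n : ℕ} (p : Fin n → Fin (n + 1)) :
    volume (parentPolytope p) = ENNReal.ofReal (parentMatrix p).det ∧
      0 ≤ (parentMatrix p).det := by
  by_cases hdet : (parentMatrix p).det = 0
  · have : parentPolytope p = ∅ := by
      rw [Set.eq_empty_iff_forall_notMem]
      intro y hy
      exact one_ne_zero ((det_parentMatrix_of_mem hy).symm.trans hdet)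
    simp [this, hdet]
  · have hunit : IsUnit (parentMatrix p) := (Matrix.isUnit_iff_isUnit_det _).2 (Ne.isUnit hdet)
    obtain ⟨y, hy⟩ := Matrix.mulVec_surjective_iff_isUnit.2 hunit (fun _ => (1 / 2 : ℝ))
    have hy : y ∈ parentPolytope p := fun i => by
      rw [← parentMatrix_mulVec, hy]
      norm_num
    have h1 := det_parentMatrix_of_mem hy
    rw [parentPolytope_eq_preimage, Measure.addHaar_preimage_linearMap _
      (by rwa [LinearMap.det_toLin']), LinearMap.det_toLin', h1, Real.volume_pi_Ioo]
    simp

theorem measurableSet_parentPolytope {n : ℕ} (p : Fin n → Fin (n + 1)) :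
    MeasurableSet (parentPolytope p) := by
  rw [parentPolytope_eq_preimage]
  exact (LinearMap.continuous_of_finiteDimensional _).measurable
    (MeasurableSet.univ_pi fun _ => measurableSet_Ioo)

/-- The change of coordinates exchanging the roles of the vertices `0` and `r`. -/
def reroot {n : ℕ} (r : Fin (n + 1)) : (Fin n → ℝ) →ₗ[ℝ] (Fin n → ℝ) where
  toFun y i := (Fin.cons 0 y : Fin (n + 1) → ℝ) (Equiv.swap 0 r i.succ) -
    (Fin.cons 0 y : Fin (n + 1) → ℝ) r
  map_add' y z := by
    ext i
    have : (Fin.cons 0 (y + z) : Fin (n + 1) → ℝ) = Fin.cons 0 y + Fin.cons 0 z := by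
      ext j; cases j using Fin.cases <;> simp
    simp only [this, Pi.add_apply]
    ring
  map_smul' c y := by
    ext i
    have : (Fin.cons 0 (c • y) : Fin (n + 1) → ℝ) = c • Fin.cons 0 y := by
      ext j; cases j using Fin.cases <;> simp
    simp only [this, Pi.smul_apply, smul_eq_mul, RingHom.id_apply]
    ring

theorem cons_reroot {n : ℕ} (r : Fin (n + 1)) (y : Fin n → ℝ) (i : Fin (n + 1)) :
    (Fin.cons 0 (reroot r y) : Fin (n + 1) → ℝ) i =
      (Fin.cons 0 y : Fin (n + 1) → ℝ) (Equiv.swap 0 r i) -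
        (Fin.cons 0 y : Fin (n + 1) → ℝ) r := by
  cases i using Fin.cases with
  | zero => simp
  | succ i => rfl

theorem reroot_reroot {n : ℕ} (r : Fin (n + 1)) (y : Fin n → ℝ) : reroot r (reroot r y) = y := by
  ext i
  have h := cons_reroot r (reroot r y) i.succ
  rw [Fin.cons_succ, cons_reroot, cons_reroot] at h
  simpa using h

theorem measurePreserving_reroot {n : ℕ} (r : Fin (n + 1)) :
    MeasurePreserving (reroot (n := n) r) volume volume := by
  have hcomp : reroot (n := n) r ∘ₗ reroot r = LinearMap.id :=
    LinearMap.ext (reroot_reroot r)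
  have hdet : LinearMap.det (reroot (n := n) r) * LinearMap.det (reroot (n := n) r) = 1 := by
    rw [← LinearMap.det_comp, hcomp, LinearMap.det_id]
  refine ⟨(LinearMap.continuous_of_finiteDimensional _).measurable, ?_⟩
  rw [Real.map_linearMap_volume_pi_eq_smul_volume_pi (left_ne_zero_of_mul_eq_one hdet)]
  have : |(LinearMap.det (reroot (n := n) r))⁻¹| = 1 := by
    rcases mul_self_eq_one_iff.1 hdet with h | h <;> simp [h]
  simp [this]

theorem volume_real_parentPolytope {n : ℕ} (p : Fin n → Fin (n + 1)) :
    volume.real (parentPolytope p) = (parentMatrix p).det := by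
  rw [Measure.real, (volume_parentPolytope p).1, ENNReal.toReal_ofReal (volume_parentPolytope p).2]

theorem prod_pointsBelow_erase_zero {n : ℕ} (y : Fin n → ℝ) :
    ∏ i ∈ Finset.univ.erase 0, pointsBelow (Fin.cons 0 y : Fin (n + 1) → ℝ) i =
      ∑ p : Fin n → Fin (n + 1), (parentPolytope p).indicator (fun _ => (1 : ℝ)) y := by
  rw [← Finset.compl_singleton, ← Fin.image_succ_univ,
    Finset.prod_image (fun _ _ _ _ h => Fin.succ_injective n h)]
  simp only [pointsBelow, Finset.prod_univ_sum, Fintype.piFinset_univ]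
  refine Finset.sum_congr rfl fun p _ => ?_
  rw [Finset.prod_ite_zero, Set.indicator_apply]
  simp [parentPolytope]

theorem prod_pointsBelow_erase_reroot {n : ℕ} (r : Fin (n + 1)) (y : Fin n → ℝ) :
    ∏ i ∈ Finset.univ.erase 0, pointsBelow (Fin.cons 0 (reroot r y) : Fin (n + 1) → ℝ) i =
      ∏ i ∈ Finset.univ.erase r, pointsBelow (Fin.cons 0 y : Fin (n + 1) → ℝ) i := by
  refine Finset.prod_equiv (Equiv.swap 0 r) (fun i => ?_) fun i _ => ?_
  · simp only [Finset.mem_erase, Finset.mem_univ, and_true, ne_eq, not_iff_not]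
    rw [Equiv.swap_apply_eq_iff, Equiv.swap_apply_right]
  · simp only [pointsBelow, cons_reroot, sub_sub_sub_cancel_right]
    exact Equiv.sum_comp (Equiv.swap 0 r) fun j =>
      if 0 < (Fin.cons 0 y : Fin (n + 1) → ℝ) (Equiv.swap 0 r i) -
          (Fin.cons 0 y : Fin (n + 1) → ℝ) j ∧
        (Fin.cons 0 y : Fin (n + 1) → ℝ) (Equiv.swap 0 r i) -
          (Fin.cons 0 y : Fin (n + 1) → ℝ) j < 1 then (1 : ℝ) else 0

theorem integrable_indicator_parentPolytope {n : ℕ} (p : Fin n → Fin (n + 1)) :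
    Integrable ((parentPolytope p).indicator fun _ => (1 : ℝ)) := by
  rw [integrable_indicator_iff (measurableSet_parentPolytope p)]
  refine integrableOn_const ?_
  rw [(volume_parentPolytope p).1]
  exact ENNReal.ofReal_ne_top

theorem integrable_prod_pointsBelow_erase {n : ℕ} (r : Fin (n + 1)) :
    Integrable fun y : Fin n → ℝ =>
      ∏ i ∈ Finset.univ.erase r, pointsBelow (Fin.cons 0 y : Fin (n + 1) → ℝ) i := by
  simp only [← prod_pointsBelow_erase_reroot r, prod_pointsBelow_erase_zero]
  exact (measurePreserving_reroot r).integrable_comp_of_integrable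
    (integrable_finsetSum _ fun p _ => integrable_indicator_parentPolytope p)

theorem integral_prod_pointsBelow_erase {n : ℕ} (r : Fin (n + 1)) :
    ∫ y : Fin n → ℝ, ∏ i ∈ Finset.univ.erase r, pointsBelow (Fin.cons 0 y : Fin (n + 1) → ℝ) i =
      ∑ p : Fin n → Fin (n + 1), (parentMatrix p).det := by
  have hemb : MeasurableEmbedding (reroot (n := n) r) :=
    (MeasurableEquiv.mk ⟨reroot r, reroot r, reroot_reroot r, reroot_reroot r⟩
      (measurePreserving_reroot r).measurable
      (measurePreserving_reroot r).measurable).measurableEmbedding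
  simp only [← prod_pointsBelow_erase_reroot r]
  rw [(measurePreserving_reroot r).integral_comp hemb fun y =>
    ∏ i ∈ Finset.univ.erase 0, pointsBelow (Fin.cons 0 y : Fin (n + 1) → ℝ) i]
  simp only [prod_pointsBelow_erase_zero]
  rw [integral_finsetSum _ fun p _ => integrable_indicator_parentPolytope p]
  refine Finset.sum_congr rfl fun p _ => ?_
  rw [integral_indicator (measurableSet_parentPolytope p), setIntegral_const,
    volume_real_parentPolytope, smul_eq_mul, mul_one]

theorem continuous_cons_zero_apply {n : ℕ} (i : Fin (n + 1)) :
    Continuous fun y : Fin n → ℝ => (Fin.cons 0 y : Fin (n + 1) → ℝ) i := by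
  cases i using Fin.cases with
  | zero => simpa using continuous_const
  | succ i => simpa using continuous_apply i

theorem measurableSet_graphPolytope {n : ℕ} (G : SimpleGraph (Fin (n + 1))) :
    MeasurableSet (graphPolytope n G) := by
  simp only [graphPolytope, Set.ofPred_forall]
  refine MeasurableSet.iInter fun i => MeasurableSet.iInter fun j => MeasurableSet.iInter fun _ => ?_
  exact measurableSet_lt (((continuous_cons_zero_apply i).sub
    (continuous_cons_zero_apply j)).abs.measurable) measurable_const

theorem abs_sub_le_walk_length {V : Type*} {G : SimpleGraph V} {x : V → ℝ}
    (hx : ∀ i j, G.Adj i j → |x i - x j| < 1) {u v : V} (w : G.Walk u v) :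
    |x u - x v| ≤ w.length := by
  induction w with
  | nil => simp
  | @cons u v w h p ih =>
    rw [SimpleGraph.Walk.length_cons, Nat.cast_add, Nat.cast_one]
    linarith [abs_sub_le (x u) (x v) (x w), hx _ _ h]

theorem volume_graphPolytope_ne_top {n : ℕ} {G : SimpleGraph (Fin (n + 1))} (hG : G.Connected) :
    volume (graphPolytope n G) ≠ ⊤ := by
  choose w _ using fun i : Fin n => (hG.preconnected i.succ 0).exists_isPath
  refine ((measure_mono ?_).trans_lt (isCompact_Icc (a := fun i => -((w i).length : ℝ))
    (b := fun i => ((w i).length : ℝ))).measure_lt_top).ne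
  intro y hy
  have h : ∀ i, |y i| ≤ (w i).length := fun i => by
    simpa using abs_sub_le_walk_length hy (w i)
  exact ⟨fun i => (abs_le.1 (h i)).1, fun i => (abs_le.1 (h i)).2⟩

theorem ae_injective_cons_zero (n : ℕ) :
    ∀ᵐ y : Fin n → ℝ, Function.Injective (Fin.cons 0 y : Fin (n + 1) → ℝ) := by
  have hne : ∀ i j : Fin (n + 1), i ≠ j → ∀ᵐ y : Fin n → ℝ,
      (Fin.cons 0 y : Fin (n + 1) → ℝ) i ≠ (Fin.cons 0 y : Fin (n + 1) → ℝ) j := by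
    intro i j hij
    let S : Submodule ℝ (Fin n → ℝ) :=
      { carrier := {y | (Fin.cons 0 y : Fin (n + 1) → ℝ) i = (Fin.cons 0 y : Fin (n + 1) → ℝ) j}
        zero_mem' := by
          cases i using Fin.cases <;> cases j using Fin.cases <;> simp
        add_mem' := by
          intro y z
          cases i using Fin.cases <;> cases j using Fin.cases <;> simp +contextual
        smul_mem' := by
          intro c y
          cases i using Fin.cases <;> cases j using Fin.cases <;> simp +contextual [eq_comm] }
    have hS : S ≠ ⊤ := by
      intro h
      have hy : (fun k : Fin n => (k : ℝ) + 1) ∈ S := h ▸ Submodule.mem_top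
      have hc : ∀ k : Fin (n + 1),
          (Fin.cons 0 (fun k : Fin n => (k : ℝ) + 1) : Fin (n + 1) → ℝ) k = (k : ℕ) := by
        intro k
        cases k using Fin.cases <;> simp
      have hy' : (Fin.cons 0 (fun k : Fin n => (k : ℝ) + 1) : Fin (n + 1) → ℝ) i =
        (Fin.cons 0 (fun k : Fin n => (k : ℝ) + 1) : Fin (n + 1) → ℝ) j := hy
      rw [hc, hc] at hy'
      exact hij (Fin.ext (Nat.cast_injective hy'))
    have h0 := Measure.addHaar_submodule volume S hS
    filter_upwards [measure_eq_zero_iff_ae_notMem.1 h0] with y hy using hy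
  have hall : ∀ᵐ y : Fin n → ℝ, ∀ i j : Fin (n + 1), i ≠ j →
      (Fin.cons 0 y : Fin (n + 1) → ℝ) i ≠ (Fin.cons 0 y : Fin (n + 1) → ℝ) j := by
    simp only [ae_all_iff]
    exact hne
  filter_upwards [hall] with y hy i j hij
  by_contra h
  exact hy i j h hij

theorem mem_graphPolytope_iff {n : ℕ} (G : SimpleGraph (Fin (n + 1))) (y : Fin n → ℝ) :
    y ∈ graphPolytope n G ↔ G ≤ unitIntervalGraph (Fin.cons 0 y : Fin (n + 1) → ℝ) :=
  ⟨fun h i j hij => ⟨hij.ne, h i j hij⟩,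
    fun h _ _ hij => (h hij).2⟩

/-- The sum over all connected graphs `G` on a vertex set of size `n+1` of
`(-1)^(e(G))` times the volume of `Π_G` equals `(-1)^n * (n+1)^n`
(i.e. `(-1)^(m-1) * m^(m-1)` for `m = n+1` vertices). -/
theorem connected_polytope_alternating_sum (n : ℕ) :
    ∑ G ∈ Finset.univ.filter (fun G : SimpleGraph (Fin (n + 1)) => G.Connected),
      (-1 : ℝ) ^ (Nat.card G.edgeSet) * (volume (graphPolytope n G)).toReal
      = (-1) ^ n * (n + 1 : ℝ) ^ n := by
  have hint : ∀ G ∈ Finset.univ.filter (fun G : SimpleGraph (Fin (n + 1)) => G.Connected),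
      Integrable ((graphPolytope n G).indicator fun _ => (-1 : ℝ) ^ Nat.card G.edgeSet) := by
    intro G hG
    rw [integrable_indicator_iff (measurableSet_graphPolytope G)]
    exact integrableOn_const (volume_graphPolytope_ne_top (Finset.mem_filter.1 hG).2)
  calc
    _ = ∑ G ∈ Finset.univ.filter (fun G : SimpleGraph (Fin (n + 1)) => G.Connected),
        ∫ y, (graphPolytope n G).indicator (fun _ => (-1 : ℝ) ^ Nat.card G.edgeSet) y := by
      refine Finset.sum_congr rfl fun G _ => ?_
      rw [integral_indicator (measurableSet_graphPolytope G), setIntegral_const, smul_eq_mul,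
        mul_comm, Measure.real]
    _ = ∫ y : Fin n → ℝ, ∑ r : Fin (n + 1), (-1 : ℝ) ^ n *
        ∏ i ∈ Finset.univ.erase r, pointsBelow (Fin.cons 0 y : Fin (n + 1) → ℝ) i := by
      rw [← integral_finsetSum _ hint]
      refine integral_congr_ae ?_
      filter_upwards [ae_injective_cons_zero n] with y hy
      simp only [Set.indicator_apply, mem_graphPolytope_iff]
      rw [← Finset.sum_filter, Finset.filter_filter, sum_connected_le_unitIntervalGraph hy]
      simp [Finset.prod_neg]
    _ = (-1 : ℝ) ^ n * ∑ p : Fin n → Fin (n + 1), (parentMatrix p).det * (n + 1) := by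
      rw [integral_finsetSum _ fun r _ => (integrable_prod_pointsBelow_erase r).const_mul _]
      simp only [integral_const_mul, integral_prod_pointsBelow_erase]
      rw [Finset.sum_const, Finset.card_univ, Fintype.card_fin, nsmul_eq_mul, ← Finset.sum_mul]
      push_cast
      ring
    _ = _ := by rw [sum_det_parentMatrix]
end
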